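/- arXiv:1305.4714 — 2 statements merged into one kernel-verified Lean document; each statement's English description precedes it below -/
import Mathlib

section
/- (Proposition 1, existence of asymptotic momenta) Assume Assumption A(μ) with 1/2 < μ ≤ 1. Let (y,η) : ℝ → ℝ^d × ℝ^d solve the Hamilton equations for k with η(0) = ξ₀ ≠ 0, and suppose there exist c, C > 0 such that |y(t)| ≥ c|t| − C for all t ∈ ℝ. Then the limits ξ₊ = lim_{t→+∞} η(t) and ξ₋ = lim_{t→−∞} η(t) exist in ℝ^d. -/
open Filter MeasureTheory
open scoped Topology BigOperators

noncomputable section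

abbrev E (d : ℕ) := EuclideanSpace ℝ (Fin d)

/-- Japanese bracket `⟨x⟩ = (1+|x|²)^{1/2}`. -/
def jap {d : ℕ} (x : E d) : ℝ := Real.sqrt (1 + ‖x‖ ^ 2)

/-- Japanese bracket of a real number. -/
def japr (t : ℝ) : ℝ := Real.sqrt (1 + t ^ 2)

/-- The kinetic energy symbol `k(x,ξ) = (1/2) Σ a_{mn}(x) ξ_m ξ_n`. -/
def kk {d : ℕ} (a : Fin d → Fin d → E d → ℝ) (x ξ : E d) : ℝ :=
  (1 / 2) * ∑ m : Fin d, ∑ n : Fin d, a m n x * ξ m * ξ n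

/-- `(y, η)` solves the Hamilton equations for the Hamiltonian `h`. -/
def IsHamiltonSol {d : ℕ} (h : E d → E d → ℝ) (y η : ℝ → E d) : Prop :=
  ∀ t : ℝ, HasDerivAt y (gradient (h (y t)) (η t)) t ∧
    HasDerivAt η (-gradient (fun x => h x (η t)) (y t)) t

/-- Assumption A(μ): smoothness, symmetry, positive definiteness, and symbol-type decay. -/
def AssumptionA {d : ℕ} (μ : ℝ) (a : Fin d → Fin d → E d → ℝ) (V : E d → ℝ) : Prop :=
  (∀ m n, ContDiff ℝ (⊤ : ℕ∞) (a m n)) ∧ ContDiff ℝ (⊤ : ℕ∞) V ∧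
  (∀ m n x, a m n x = a n m x) ∧
  (∀ (x ξ : E d), ξ ≠ 0 → 0 < ∑ m : Fin d, ∑ n : Fin d, a m n x * ξ m * ξ n) ∧
  (∀ m n (j : ℕ), ∃ C > 0, ∀ x : E d,
    ‖iteratedFDeriv ℝ j (fun z => a m n z - if m = n then (1 : ℝ) else 0) x‖
      ≤ C * jap x ^ (-μ - (j : ℝ))) ∧
  (∀ j : ℕ, ∃ C > 0, ∀ x : E d,
    ‖iteratedFDeriv ℝ j V x‖ ≤ C * jap x ^ (2 - μ - (j : ℝ)))

theorem aux_lim {d : ℕ} (f : ℝ → E d) (hf : Differentiable ℝ f) (μ M T : ℝ) (hμ : 0 < μ) (hT : 0 < T)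
    (hb : ∀ t, T < t → ‖deriv f t‖ ≤ M * t ^ (-μ - 1)) : ∃ l, Tendsto f atTop (𝓝 l) := by
  refine ⟨_, tendsto_limUnder_of_hasDerivAt_of_integrableOn_Ioi (a := T) (f' := deriv f)
    (fun x _ => (hf x).hasDerivAt) ?_⟩
  have h1 : IntegrableOn (fun t : ℝ => M * t ^ (-μ - 1)) (Set.Ioi T) :=
    (integrableOn_Ioi_rpow_of_lt (by linarith) hT).const_mul M
  refine Integrable.mono' h1 (stronglyMeasurable_deriv f).aestronglyMeasurable ?_
  exact (ae_restrict_iff' measurableSet_Ioi).2 (Eventually.of_forall fun t ht => hb t ht)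

theorem aux_coord {d : ℕ} (ξ : E d) (m : Fin d) : |ξ m| ≤ ‖ξ‖ := by
  simpa using PiLp.norm_apply_le ξ m

theorem aux_energy {d : ℕ} (a : Fin d → Fin d → E d → ℝ)
    (ha : ∀ m n, Differentiable ℝ (a m n)) (y η : ℝ → E d)
    (hHam : IsHamiltonSol (kk a) y η) (t : ℝ) : kk a (y t) (η t) = kk a (y 0) (η 0) := by
  have hF : Differentiable ℝ (fun p : E d × E d => kk a p.1 p.2) := by
    unfold kk
    have : ∀ m n, Differentiable ℝ (fun p : E d × E d => a m n p.1) :=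
      fun m n => (ha m n).comp differentiable_fst
    fun_prop
  have key : ∀ s, HasDerivAt (fun t => kk a (y t) (η t)) 0 s := by
    intro s
    obtain ⟨hy, hη⟩ := hHam s
    have h0 := (hF (y s, η s)).hasFDerivAt
    set L := fderiv ℝ (fun p : E d × E d => kk a p.1 p.2) (y s, η s) with hL
    have hx : HasFDerivAt (fun x => kk a x (η s)) (L.comp (ContinuousLinearMap.inl ℝ _ _)) (y s) :=
      HasFDerivAt.comp (y s) (g := fun p : E d × E d => kk a p.1 p.2)
        (f := fun x => (x, η s)) h0 (hasFDerivAt_prodMk_left (y s) (η s))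
    have hv : HasFDerivAt (kk a (y s)) (L.comp (ContinuousLinearMap.inr ℝ _ _)) (η s) :=
      HasFDerivAt.comp (η s) (g := fun p : E d × E d => kk a p.1 p.2)
        (f := fun x => (y s, x)) h0 (hasFDerivAt_prodMk_right (y s) (η s))
    have hc := HasFDerivAt.comp_hasDerivAt s (f := fun t => (y t, η t)) h0 (hy.prodMk hη)
    have e1 : ∀ w, L (w, 0) = inner ℝ (gradient (fun x => kk a x (η s)) (y s)) w := by
      intro w
      rw [gradient, InnerProductSpace.toDual_symm_apply, hx.fderiv]; simp
    have e2 : ∀ w, L (0, w) = inner ℝ (gradient (kk a (y s)) (η s)) w := by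
      intro w
      rw [gradient, InnerProductSpace.toDual_symm_apply, hv.fderiv]; simp
    have : ∀ u w, L (u, w) = L (u, 0) + L (0, w) := by
      intro u w; rw [← map_add]; simp
    rw [this, e1, e2, inner_neg_right, real_inner_comm, add_neg_cancel] at hc
    exact hc
  exact is_const_of_deriv_eq_zero (fun s => (key s).differentiableAt) (fun s => (key s).deriv) t 0

theorem aux_grad {d : ℕ} (a : Fin d → Fin d → E d → ℝ)
    (ha : ∀ m n, Differentiable ℝ (a m n)) (K : Fin d → Fin d → ℝ) (r : ℝ) (x ξ : E d)
    (hK : ∀ m n, ‖fderiv ℝ (a m n) x‖ ≤ K m n * r) :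
    ‖gradient (fun x => kk a x ξ) x‖ ≤ (1 / 2) * (∑ m, ∑ n, K m n) * r * ‖ξ‖ ^ 2 := by
  have h : HasFDerivAt (fun x => kk a x ξ)
      ((1 / 2 : ℝ) • ∑ m, ∑ n, (ξ m * ξ n) • fderiv ℝ (a m n) x) x := by
    unfold kk
    refine HasFDerivAt.const_mul (HasFDerivAt.fun_sum fun m _ => HasFDerivAt.fun_sum fun n _ => ?_) _
    have := ((ha m n) x).hasFDerivAt.const_mul (ξ m * ξ n)
    have e : (fun x => a m n x * ξ m * ξ n) = fun x => ξ m * ξ n * a m n x := by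
      funext z; ring
    rw [e]
    exact this
  rw [gradient, LinearIsometryEquiv.norm_map, h.fderiv, norm_smul]
  have : ‖∑ m, ∑ n, (ξ m * ξ n) • fderiv ℝ (a m n) x‖ ≤ ∑ m, ∑ n, ‖ξ‖ ^ 2 * (K m n * r) := by
    refine norm_sum_le_of_le _ fun m _ => norm_sum_le_of_le _ fun n _ => ?_
    rw [norm_smul, Real.norm_eq_abs, abs_mul, sq]
    have := aux_coord ξ m
    have := aux_coord ξ n
    have := hK m n
    gcongr
  have e : ∑ m, ∑ n, ‖ξ‖ ^ 2 * (K m n * r) = (∑ m, ∑ n, K m n) * r * ‖ξ‖ ^ 2 := by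
    simp only [Finset.sum_mul]
    refine Finset.sum_congr rfl fun m _ => Finset.sum_congr rfl fun n _ => by ring
  rw [e] at this
  norm_num
  linarith

theorem aux_ell {d : ℕ} (a : Fin d → Fin d → E d → ℝ) (K : Fin d → Fin d → ℝ) (r : ℝ) (x ξ : E d)
    (hK : ∀ m n, |a m n x - if m = n then (1 : ℝ) else 0| ≤ K m n * r)
    (hr : (∑ m, ∑ n, K m n) * r ≤ 1 / 2) : ‖ξ‖ ^ 2 ≤ 4 * kk a x ξ := by
  have h1 : ‖ξ‖ ^ 2 = ∑ m, ∑ n, (if m = n then (1 : ℝ) else 0) * ξ m * ξ n := by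
    rw [EuclideanSpace.real_norm_sq_eq]
    simp [sq]
  have h2 : |∑ m, ∑ n, (a m n x - if m = n then (1 : ℝ) else 0) * ξ m * ξ n|
      ≤ ∑ m, ∑ n, ‖ξ‖ ^ 2 * (K m n * r) := by
    rw [← Real.norm_eq_abs]
    refine norm_sum_le_of_le _ fun m _ => norm_sum_le_of_le _ fun n _ => ?_
    rw [Real.norm_eq_abs, mul_assoc, abs_mul, abs_mul, sq, mul_comm]
    have := aux_coord ξ m
    have := aux_coord ξ n
    have := hK m n
    gcongr
  have e : ∑ m, ∑ n, ‖ξ‖ ^ 2 * (K m n * r) = ((∑ m, ∑ n, K m n) * r) * ‖ξ‖ ^ 2 := by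
    simp only [Finset.sum_mul]
    refine Finset.sum_congr rfl fun m _ => Finset.sum_congr rfl fun n _ => by ring
  have e2 : ∑ m, ∑ n, (a m n x - if m = n then (1 : ℝ) else 0) * ξ m * ξ n
      = 2 * kk a x ξ - ‖ξ‖ ^ 2 := by
    rw [h1, kk]
    simp only [sub_mul, Finset.sum_sub_distrib]
    ring
  rw [e, e2] at h2
  have h3 := (abs_le.1 h2).1
  nlinarith [sq_nonneg ‖ξ‖]

theorem aux_jap {d : ℕ} (x : E d) : ‖x‖ ≤ jap x :=
  Real.le_sqrt_of_sq_le (by linarith)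

/-- Proposition 1 (existence of asymptotic momenta). -/
theorem stmt0 (d : ℕ) (hd : 1 ≤ d) (μ : ℝ) (hμ : 1 / 2 < μ) (hμ1 : μ ≤ 1)
    (a : Fin d → Fin d → E d → ℝ) (V : E d → ℝ) (hA : AssumptionA μ a V)
    (y η : ℝ → E d) (ξ0 : E d) (hξ0 : ξ0 ≠ 0) (hη0 : η 0 = ξ0)
    (hHam : IsHamiltonSol (kk a) y η)
    (c C : ℝ) (hc : 0 < c) (hC : 0 < C) (hnt : ∀ t : ℝ, c * |t| - C ≤ ‖y t‖) :
    (∃ ξp : E d, Tendsto η atTop (𝓝 ξp)) ∧ (∃ ξm : E d, Tendsto η atBot (𝓝 ξm)) := by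
  obtain ⟨hsm, -, -, -, hdec, -⟩ := hA
  have ha : ∀ m n, Differentiable ℝ (a m n) := fun m n => (hsm m n).differentiable (by simp)
  choose K0 hK0p hK0 using fun m n => hdec m n 0
  choose K1 hK1p hK1 using fun m n => hdec m n 1
  have hK0' : ∀ m n x, |a m n x - if m = n then (1 : ℝ) else 0| ≤ K0 m n * jap x ^ (-μ) := by
    intro m n x
    simpa using hK0 m n x
  have hK1' : ∀ m n x, ‖fderiv ℝ (a m n) x‖ ≤ K1 m n * jap x ^ (-μ - 1) := by
    intro m n x
    have := hK1 m n x
    rw [norm_iteratedFDeriv_one, fderiv_sub_const] at this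
    simpa using this
  have hlim : Tendsto (fun s : ℝ => (∑ m, ∑ n, K0 m n) * s ^ (-μ)) atTop (𝓝 0) := by
    simpa using (tendsto_rpow_neg_atTop (y := μ) (by linarith)).const_mul (∑ m, ∑ n, K0 m n)
  obtain ⟨R, hR⟩ := eventually_atTop.1 (hlim.eventually (ge_mem_nhds (show (0:ℝ) < 1 / 2 by norm_num)))
  set E0 := kk a (y 0) (η 0) with hE0
  set B := ∑ m, ∑ n, K1 m n with hB
  have hBp : 0 ≤ B := Finset.sum_nonneg fun m _ => Finset.sum_nonneg fun n _ => (hK1p m n).le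
  set T := max (2 * C / c) (2 * |R| / c) with hT
  have hTp : 0 < T := lt_max_of_lt_left (by positivity)
  have main : ∀ t, T < |t| →
      ‖deriv η t‖ ≤ ((1 / 2) * B * (c / 2) ^ (-μ - 1) * (4 * E0)) * |t| ^ (-μ - 1) := by
    intro t ht
    have t1 : 2 * C / c < |t| := lt_of_le_of_lt (le_max_left _ _) ht
    have t2 : 2 * |R| / c < |t| := lt_of_le_of_lt (le_max_right _ _) ht
    rw [div_lt_iff₀ hc] at t1 t2
    have tp : 0 < |t| := hTp.trans ht
    have hj : c / 2 * |t| ≤ jap (y t) := by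
      have := hnt t
      have := aux_jap (y t)
      nlinarith
    have hRj : R ≤ jap (y t) := by
      have := le_abs_self R
      nlinarith
    have hell := aux_ell a K0 _ (y t) (η t) (fun m n => hK0' m n (y t)) (hR _ hRj)
    rw [aux_energy a ha y η hHam t, ← hE0] at hell
    have hg := aux_grad a ha K1 _ (y t) (η t) (fun m n => hK1' m n (y t))
    rw [(hHam t).2.deriv, norm_neg]
    have hp : jap (y t) ^ (-μ - 1) ≤ (c / 2) ^ (-μ - 1) * |t| ^ (-μ - 1) := by
      rw [← Real.mul_rpow (by positivity) (by positivity)]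
      exact Real.rpow_le_rpow_of_nonpos (by positivity) hj (by linarith)
    calc _ ≤ (1 / 2) * B * jap (y t) ^ (-μ - 1) * ‖η t‖ ^ 2 := hg
      _ ≤ (1 / 2) * B * ((c / 2) ^ (-μ - 1) * |t| ^ (-μ - 1)) * (4 * E0) := by gcongr
      _ = _ := by ring
  have hd' : Differentiable ℝ η := fun t => (hHam t).2.differentiableAt
  constructor
  · refine aux_lim η hd' μ ((1 / 2) * B * (c / 2) ^ (-μ - 1) * (4 * E0)) T (by linarith) hTp fun t ht => ?_
    have := main t (by rwa [abs_of_pos (hTp.trans ht)])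
    rwa [abs_of_pos (hTp.trans ht)] at this
  · obtain ⟨l, hl⟩ := aux_lim (fun t => η (-t)) (hd'.comp differentiable_neg) μ
      ((1 / 2) * B * (c / 2) ^ (-μ - 1) * (4 * E0)) T (by linarith) hTp
      fun t ht => by
        have := main (-t) (by rwa [abs_neg, abs_of_pos (hTp.trans ht)])
        rw [abs_neg, abs_of_pos (hTp.trans ht)] at this
        rwa [deriv_comp_neg, norm_neg]
    refine ⟨l, ?_⟩
    simpa [Function.comp_def] using hl.comp tendsto_neg_atBot_atTop
end
end

section
/- (Proposition 1, existence of asymptotic positions) Assume Assumption A(μ) with 1/2 < μ ≤ 1. Let (y,η) : ℝ → ℝ^d × ℝ^d solve the Hamilton equations for k with η(0) = ξ₀ ≠ 0, and suppose there exist c, C > 0 such that |y(t)| ≥ c|t| − C for all t ∈ ℝ. Then the limits x₊ = lim_{t→+∞} ( y(t) − ∇_ξΨ(t, η(t)) ) and x₋ = lim_{t→−∞} ( y(t) − ∇_ξΨ(t, η(t)) ) exist in ℝ^d. -/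
open Filter MeasureTheory
open scoped Topology BigOperators

noncomputable section

/-- `Ψ(t,ξ) = ∫₀ᵗ k(sξ, ξ) ds`. -/
def Psi {d : ℕ} (a : Fin d → Fin d → E d → ℝ) (t : ℝ) (ξ : E d) : ℝ :=
  ∫ s in (0 : ℝ)..t, kk a (s • ξ) ξ

section Abstract

set_option synthInstance.maxHeartbeats 400000
set_option maxHeartbeats 1000000
set_option maxSynthPendingDepth 3

variable {H : Type*} [NormedAddCommGroup H] [InnerProductSpace ℝ H]

/-- growth / decay from derivative bound -/
theorem aux_growth {G : Type*} [NormedAddCommGroup G] [NormedSpace ℝ G]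
    {f f' : ℝ → G} {T K p : ℝ} (hT : 0 < T) (hp : p ≠ 0)
    (hf : ∀ t, T ≤ t → HasDerivAt f (f' t) t)
    (hb : ∀ t, T ≤ t → ‖f' t‖ ≤ K * t ^ (p - 1)) {s t : ℝ} (hs : T ≤ s) (hst : s ≤ t) :
    ‖f t - f s‖ ≤ K / p * (t ^ p - s ^ p) := by
  have hder : ∀ x, 0 < x → HasDerivAt (fun x : ℝ => K / p * (x ^ p - s ^ p)) (K * x ^ (p - 1)) x := by
    intro x hx
    have h := ((Real.hasDerivAt_rpow_const (x := x) (p := p) (Or.inl hx.ne')).sub_const (s ^ p)).const_mul (K / p)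
    refine h.congr_deriv ?_
    rw [← mul_assoc, div_mul_cancel₀ _ hp]
  have := image_norm_le_of_norm_deriv_right_le_deriv_boundary' (f := fun x => f x - f s) (f' := f')
    (a := s) (b := t) (B := fun x : ℝ => K / p * (x ^ p - s ^ p)) (B' := fun x => K * x ^ (p - 1))
    (fun x hx => ((hf x (hs.trans hx.1)).sub_const _).continuousAt.continuousWithinAt)
    (fun x hx => ((hf x (hs.trans hx.1)).sub_const _).hasDerivWithinAt)
    (by simp)
    (fun x hx => (hder x (by linarith [hx.1])).continuousAt.continuousWithinAt)
    (fun x hx => (hder x (by linarith [hx.1])).hasDerivWithinAt)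
    (fun x hx => hb x (hs.trans hx.1))
  exact this ⟨hst, le_rfl⟩

theorem aux_conv {G : Type*} [NormedAddCommGroup G] [NormedSpace ℝ G] [CompleteSpace G]
    {f f' : ℝ → G} {T K ε : ℝ} (hT : 0 < T) (hε : 0 < ε) (hK : 0 ≤ K)
    (hf : ∀ t, T ≤ t → HasDerivAt f (f' t) t)
    (hb : ∀ t, T ≤ t → ‖f' t‖ ≤ K * t ^ (-ε - 1)) :
    ∃ L, Tendsto f atTop (𝓝 L) ∧ ∀ t, T ≤ t → ‖f t - L‖ ≤ K / ε * t ^ (-ε) := by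
  have h1 : ∀ s t, T ≤ s → s ≤ t → ‖f t - f s‖ ≤ K / ε * s ^ (-ε) := by
    intro s t hs hst
    refine (aux_growth hT (neg_ne_zero.2 hε.ne') hf hb hs hst).trans ?_
    have : 0 ≤ t ^ (-ε) := Real.rpow_nonneg (by linarith) _
    have h2 : K / -ε * (t ^ (-ε) - s ^ (-ε)) = K / ε * s ^ (-ε) - K / ε * t ^ (-ε) := by
      field_simp; ring
    rw [h2]
    have : 0 ≤ K / ε * t ^ (-ε) := by positivity
    linarith
  have h0 : Tendsto (fun s : ℝ => K / ε * s ^ (-ε)) atTop (𝓝 0) := by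
    simpa using (tendsto_rpow_neg_atTop hε).const_mul (K / ε)
  have hc : CauchySeq f := by
    rw [Metric.cauchySeq_iff']
    intro δ hδ
    obtain ⟨N, hN⟩ := ((h0.eventually (gt_mem_nhds hδ)).and (eventually_ge_atTop T)).exists
    refine ⟨N, fun n hn => ?_⟩
    rw [dist_eq_norm]
    exact (h1 N n hN.2 hn).trans_lt hN.1
  obtain ⟨L, hL⟩ := cauchySeq_tendsto_of_complete hc
  refine ⟨L, hL, fun t ht => ?_⟩
  have h3 : Tendsto (fun u => ‖f t - f u‖) atTop (𝓝 ‖f t - L‖) := (tendsto_const_nhds.sub hL).norm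
  refine le_of_tendsto h3 ?_
  filter_upwards [eventually_ge_atTop t] with u hu
  rw [norm_sub_rev]
  exact h1 t u ht hu

/-- quadratic form of the x-derivative -/
def QQ (B : H → H →L[ℝ] H →L[ℝ] ℝ) (x ξ : H) : H →L[ℝ] ℝ :=
  ((fderiv ℝ B x).flip ξ).flip ξ

theorem QQ_apply (B : H → H →L[ℝ] H →L[ℝ] ℝ) (x ξ v : H) :
    QQ B x ξ v = fderiv ℝ B x v ξ ξ := by simp [QQ]

def FF (B : H → H →L[ℝ] H →L[ℝ] ℝ) (t : ℝ) (x ξ : H) : H →L[ℝ] ℝ :=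
  B x ξ + (t / 2) • QQ B x ξ

theorem FF_neg (B : H → H →L[ℝ] H →L[ℝ] ℝ) (t : ℝ) (x ξ : H) : FF B (-t) x (-ξ) = - FF B t x ξ := by
  ext v
  simp [FF, QQ_apply]
  ring

structure Dec (B : H → H →L[ℝ] H →L[ℝ] ℝ) (ν M : ℝ) : Prop where
  smooth : ContDiff ℝ 2 B
  symm : ∀ x u v, B x u v = B x v u
  M0 : 0 ≤ M
  b0 : ∀ x r, 0 < r → r ≤ ‖x‖ → ‖B x‖ ≤ M * r ^ (-ν)
  b1 : ∀ x r, 0 < r → r ≤ ‖x‖ → ‖fderiv ℝ B x‖ ≤ M * r ^ (-ν - 1)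
  b2 : ∀ x r, 0 < r → r ≤ ‖x‖ → ‖fderiv ℝ (fderiv ℝ B) x‖ ≤ M * r ^ (-ν - 2)

theorem QQ_norm (B : H → H →L[ℝ] H →L[ℝ] ℝ) (x ξ : H) :
    ‖QQ B x ξ‖ ≤ ‖fderiv ℝ B x‖ * ‖ξ‖ * ‖ξ‖ := by
  refine ContinuousLinearMap.opNorm_le_bound _ (by positivity) fun v => ?_
  rw [QQ_apply]
  calc _ ≤ ‖fderiv ℝ B x v ξ‖ * ‖ξ‖ := ContinuousLinearMap.le_opNorm _ _
    _ ≤ ‖fderiv ℝ B x v‖ * ‖ξ‖ * ‖ξ‖ := by gcongr; exact ContinuousLinearMap.le_opNorm _ _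
    _ ≤ ‖fderiv ℝ B x‖ * ‖v‖ * ‖ξ‖ * ‖ξ‖ := by gcongr; exact ContinuousLinearMap.le_opNorm _ _
    _ = _ := by ring

theorem QQ_sub (B : H → H →L[ℝ] H →L[ℝ] ℝ) (x x' ξ ξ' : H) :
    ‖QQ B x ξ - QQ B x' ξ'‖ ≤ ‖fderiv ℝ B x - fderiv ℝ B x'‖ * ‖ξ‖ * ‖ξ‖
      + ‖fderiv ℝ B x'‖ * (‖ξ‖ + ‖ξ'‖) * ‖ξ - ξ'‖ := by
  refine ContinuousLinearMap.opNorm_le_bound _ (by positivity) fun v => ?_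
  have e : (QQ B x ξ - QQ B x' ξ') v = (fderiv ℝ B x - fderiv ℝ B x') v ξ ξ
      + (fderiv ℝ B x' v (ξ - ξ') ξ + fderiv ℝ B x' v ξ' (ξ - ξ')) := by
    simp [QQ_apply]
  rw [e]
  have key : ∀ (L : H →L[ℝ] H →L[ℝ] H →L[ℝ] ℝ) (a b c : H), ‖L a b c‖ ≤ ‖L‖ * ‖a‖ * ‖b‖ * ‖c‖ := by
    intro L a b c
    calc _ ≤ ‖L a b‖ * ‖c‖ := ContinuousLinearMap.le_opNorm _ _
      _ ≤ ‖L a‖ * ‖b‖ * ‖c‖ := by gcongr; exact ContinuousLinearMap.le_opNorm _ _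
      _ ≤ _ := by gcongr; exact ContinuousLinearMap.le_opNorm _ _
  have h1 := key (fderiv ℝ B x - fderiv ℝ B x') v ξ ξ
  have h2 := key (fderiv ℝ B x') v (ξ - ξ') ξ
  have h3 := key (fderiv ℝ B x') v ξ' (ξ - ξ')
  refine (norm_add_le _ _).trans ?_
  refine (add_le_add h1 ((norm_add_le _ _).trans (add_le_add h2 h3))).trans (le_of_eq ?_)
  ring

theorem Dec.lip {B : H → H →L[ℝ] H →L[ℝ] ℝ} {ν M : ℝ} (hB : Dec B ν M) {p : H} (hp : p ≠ 0)
    (R : ℝ) (hR : 0 ≤ R) :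
    ∃ K, 0 ≤ K ∧ ∀ t x x' ξ ξ', 0 < t → x ∈ Metric.closedBall (t • p) (t * ‖p‖ / 2) →
      x' ∈ Metric.closedBall (t • p) (t * ‖p‖ / 2) → ‖ξ‖ ≤ R → ‖ξ'‖ ≤ R →
      ‖FF B t x ξ - FF B t x' ξ'‖ ≤ K * (t ^ (-ν - 1) * ‖x - x'‖ + t ^ (-ν) * ‖ξ - ξ'‖) := by
  have hp' : 0 < ‖p‖ := norm_pos_iff.2 hp
  set q := ‖p‖ / 2 with hq
  have hq0 : 0 < q := by positivity
  have hM := hB.M0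
  refine ⟨M * q ^ (-ν - 1) * R + M * q ^ (-ν) + M * q ^ (-ν - 2) * R * R + M * q ^ (-ν - 1) * R,
    by positivity, ?_⟩
  intro t x x' ξ ξ' ht hx hx' hξ hξ'
  have hball : ∀ z ∈ Metric.closedBall (t • p) (t * ‖p‖ / 2), t * q ≤ ‖z‖ := by
    intro z hz
    rw [Metric.mem_closedBall, dist_eq_norm] at hz
    have h1 : ‖t • p‖ ≤ ‖z‖ + ‖z - t • p‖ := by
      have := norm_sub_le z (z - t • p)
      simpa using this
    rw [norm_smul, Real.norm_of_nonneg ht.le] at h1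
    rw [hq]; linarith
  have htq : 0 < t * q := by positivity
  have d1 : ‖B x - B x'‖ ≤ M * (t * q) ^ (-ν - 1) * ‖x - x'‖ :=
    (convex_closedBall _ _).norm_image_sub_le_of_norm_fderiv_le (𝕜 := ℝ)
      (fun z _ => (hB.smooth.differentiable (by norm_num)) z)
      (fun z hz => hB.b1 z _ htq (hball z hz)) hx' hx
  have d2 : ‖fderiv ℝ B x - fderiv ℝ B x'‖ ≤ M * (t * q) ^ (-ν - 2) * ‖x - x'‖ :=
    (convex_closedBall _ _).norm_image_sub_le_of_norm_fderiv_le (𝕜 := ℝ)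
      (fun z _ => ((hB.smooth.fderiv_right (m := 1) (by norm_num)).differentiable (by norm_num)) z)
      (fun z hz => hB.b2 z _ htq (hball z hz)) hx' hx
  have e0 := hB.b0 x' _ htq (hball x' hx')
  have e1 := hB.b1 x' _ htq (hball x' hx')
  have s1 : ‖B x ξ - B x' ξ'‖ ≤ ‖B x - B x'‖ * ‖ξ‖ + ‖B x'‖ * ‖ξ - ξ'‖ := by
    have : B x ξ - B x' ξ' = (B x - B x') ξ + B x' (ξ - ξ') := by simp
    rw [this]
    exact (norm_add_le _ _).trans (add_le_add (ContinuousLinearMap.le_opNorm _ _)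
      (ContinuousLinearMap.le_opNorm _ _))
  have s2 := QQ_sub B x x' ξ ξ'
  have s3 : ‖FF B t x ξ - FF B t x' ξ'‖ ≤ ‖B x ξ - B x' ξ'‖ + t / 2 * ‖QQ B x ξ - QQ B x' ξ'‖ := by
    have : FF B t x ξ - FF B t x' ξ' = (B x ξ - B x' ξ') + (t / 2) • (QQ B x ξ - QQ B x' ξ') := by
      simp only [FF, smul_sub]; abel
    rw [this]
    refine (norm_add_le _ _).trans ?_
    rw [norm_smul, Real.norm_of_nonneg (by positivity)]
  have t2 : t * t ^ (-ν - 2) = t ^ (-ν - 1) := by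
    rw [mul_comm, ← Real.rpow_add_one ht.ne']; congr 1; ring
  have t1 : t * t ^ (-ν - 1) = t ^ (-ν) := by
    rw [mul_comm, ← Real.rpow_add_one ht.ne']; congr 1; ring
  rw [Real.mul_rpow ht.le hq0.le] at d1 d2 e0 e1
  set X := ‖x - x'‖
  set Y := ‖ξ - ξ'‖
  have hX : 0 ≤ X := norm_nonneg _
  have hY : 0 ≤ Y := norm_nonneg _
  have f1 : ‖B x ξ - B x' ξ'‖ ≤ M * (t ^ (-ν - 1) * q ^ (-ν - 1)) * X * R
      + M * (t ^ (-ν) * q ^ (-ν)) * Y := by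
    refine s1.trans ?_
    gcongr
  have f2 : ‖QQ B x ξ - QQ B x' ξ'‖ ≤ M * (t ^ (-ν - 2) * q ^ (-ν - 2)) * X * R * R
      + M * (t ^ (-ν - 1) * q ^ (-ν - 1)) * (R + R) * Y := by
    refine s2.trans ?_
    gcongr
  have f3 : t / 2 * ‖QQ B x ξ - QQ B x' ξ'‖ ≤ M * (t ^ (-ν - 1) * q ^ (-ν - 2)) * X * R * R
      + M * (t ^ (-ν) * q ^ (-ν - 1)) * R * Y := by
    calc _ ≤ t / 2 * (M * (t ^ (-ν - 2) * q ^ (-ν - 2)) * X * R * R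
      + M * (t ^ (-ν - 1) * q ^ (-ν - 1)) * (R + R) * Y) := by gcongr
      _ = (1/2) * (M * ((t * t ^ (-ν - 2)) * q ^ (-ν - 2)) * X * R * R)
      + M * ((t * t ^ (-ν - 1)) * q ^ (-ν - 1)) * R * Y := by ring
      _ ≤ _ := by
        rw [t1, t2]
        have : 0 ≤ M * (t ^ (-ν - 1) * q ^ (-ν - 2)) * X * R * R := by positivity
        linarith
  refine (s3.trans (add_le_add f1 f3)).trans ?_
  have g1 : 0 ≤ t ^ (-ν - 1) * X := by positivity
  have g2 : 0 ≤ t ^ (-ν) * Y := by positivity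
  have c1 : 0 ≤ M * q ^ (-ν - 1) * R := by positivity
  have c2 : 0 ≤ M * q ^ (-ν) := by positivity
  have c3 : 0 ≤ M * q ^ (-ν - 2) * R * R := by positivity
  nlinarith [mul_nonneg c1 g1, mul_nonneg c2 g1, mul_nonneg c3 g2, mul_nonneg c1 g2]

theorem Dec.cont_FF {B : H → H →L[ℝ] H →L[ℝ] ℝ} {ν M : ℝ} (hB : Dec B ν M) :
    Continuous (fun q : ℝ × H => FF B q.1 (q.1 • q.2) q.2) := by
  have h1 : Continuous B := hB.smooth.continuous
  have h2 : Continuous (fderiv ℝ B) := hB.smooth.continuous_fderiv (by norm_num)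
  have h3 : Continuous (fun q : ℝ × H => (fderiv ℝ B (q.1 • q.2)).flip) :=
    (ContinuousLinearMap.flipₗᵢ ℝ H H (H →L[ℝ] ℝ)).continuous.comp (h2.comp (by fun_prop))
  have h4 : Continuous (fun q : ℝ × H => ((fderiv ℝ B (q.1 • q.2)).flip q.2).flip) :=
    (ContinuousLinearMap.flipₗᵢ ℝ H H ℝ).continuous.comp (h3.clm_apply continuous_snd)
  have h5 : Continuous (fun q : ℝ × H => B (q.1 • q.2) q.2) :=
    (h1.comp (by fun_prop)).clm_apply continuous_snd
  exact h5.add ((continuous_fst.div_const 2).smul (h4.clm_apply continuous_snd))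

end Abstract
section Abstract2

set_option synthInstance.maxHeartbeats 400000
set_option maxHeartbeats 1000000
set_option maxSynthPendingDepth 3

variable {H : Type*} [NormedAddCommGroup H] [InnerProductSpace ℝ H] [CompleteSpace H]

/-- Riesz map as a continuous real-linear map -/
def DD : (H →L[ℝ] ℝ) →L[ℝ] H :=
  LinearMap.mkContinuous
    { toFun := fun f => (InnerProductSpace.toDual ℝ H).symm f
      map_add' := fun f g => map_add _ f g
      map_smul' := fun r f => by simp } 1 (fun f => by simp)

theorem DD_eq (f : H →L[ℝ] ℝ) : DD f = (InnerProductSpace.toDual ℝ H).symm f := rfl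

theorem DD_norm (f : H →L[ℝ] ℝ) : ‖DD f‖ = ‖f‖ := by simp [DD_eq]

theorem DD_inner (f : H →L[ℝ] ℝ) (v : H) : inner ℝ (DD f) v = f v := by
  simp [DD_eq, InnerProductSpace.toDual_symm_apply]

theorem energy {B : H → H →L[ℝ] H →L[ℝ] ℝ} {ν M : ℝ} (hB : Dec B ν M) {y η : ℝ → H}
    (hy : ∀ t, HasDerivAt y (η t + DD (B (y t) (η t))) t)
    (hη : ∀ t, HasDerivAt η (-((1 / 2 : ℝ) • DD (QQ B (y t) (η t)))) t) (t : ℝ) :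
    inner ℝ (η t) (η t) + B (y t) (η t) (η t) = inner ℝ (η 0) (η 0) + B (y 0) (η 0) (η 0) := by
  have key : ∀ t, HasDerivAt (fun t => inner ℝ (η t) (η t) + B (y t) (η t) (η t)) 0 t := by
    intro t
    have h1 := (hη t).inner ℝ (hη t)
    have hBd : HasFDerivAt B (fderiv ℝ B (y t)) (y t) :=
      (hB.smooth.differentiable (by norm_num) (y t)).hasFDerivAt
    have h2 := ((hBd.comp_hasDerivAt t (hy t)).clm_apply (hη t)).clm_apply (hη t)
    refine (h1.add h2).congr_deriv ?_
    set q := QQ B (y t) (η t) with hq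
    have e1 : fderiv ℝ B (y t) (η t + DD (B (y t) (η t))) (η t) (η t)
      = q (η t + DD (B (y t) (η t))) := by rw [hq, QQ_apply]
    have e2 : ∀ v, B (y t) v (η t) = B (y t) (η t) v := fun v => hB.symm _ _ _
    have e3 : q (DD (B (y t) (η t))) = B (y t) (η t) (DD q) := by
      rw [← DD_inner, ← DD_inner (B (y t) (η t)), real_inner_comm]
    have e4 : inner ℝ (η t) (DD q) = q (η t) := by rw [real_inner_comm, DD_inner]
    simp only [Function.comp, _root_.add_apply, e1, e2]
    simp only [map_add, inner_neg_right, inner_neg_left, inner_smul_right, real_inner_smul_left,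
      map_neg, map_smul, e3, e4, DD_inner, smul_eq_mul]
    ring
  exact is_const_of_deriv_eq_zero (fun t => (key t).differentiableAt) (fun t => (key t).deriv) t 0

theorem abs_main {B : H → H →L[ℝ] H →L[ℝ] ℝ} {ν M : ℝ} (hB : Dec B ν M)
    (hν : 1 / 2 < ν) (hν1 : ν < 1)
    (hpos : ∀ x ξ, ξ ≠ 0 → 0 < inner ℝ ξ ξ + B x ξ ξ) {y η : ℝ → H} (h0 : η 0 ≠ 0)
    (hy : ∀ t, HasDerivAt y (η t + DD (B (y t) (η t))) t)
    (hη : ∀ t, HasDerivAt η (-((1 / 2 : ℝ) • DD (QQ B (y t) (η t)))) t)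
    {c C : ℝ} (hc : 0 < c) (hnt : ∀ t : ℝ, c * |t| - C ≤ ‖y t‖) :
    ∃ L, Tendsto (fun t => y t - (t • η t + DD (∫ s in (0 : ℝ)..t, FF B s (s • η t) (η t))))
      atTop (𝓝 L) := by
  have hM := hB.M0
  have hν0 : 0 < ν := by linarith
  obtain ⟨E0, hE0⟩ : ∃ E0, E0 = inner ℝ (η 0) (η 0) + B (y 0) (η 0) (η 0) := ⟨_, rfl⟩
  have hE0pos : 0 < E0 := hE0 ▸ hpos _ _ h0
  have hE : ∀ t, ‖η t‖ ^ 2 + B (y t) (η t) (η t) = E0 := by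
    intro t
    rw [hE0, ← energy hB hy hη t, real_inner_self_eq_norm_sq]
  have hc2 : 0 < c / 2 := by positivity
  -- large time
  obtain ⟨T, hT⟩ : ∃ T, ∀ t, T ≤ t → 1 ≤ t ∧ c / 2 * t ≤ ‖y t‖ ∧
      M * (c / 2) ^ (-ν) * t ^ (-ν) ≤ 1 / 2 := by
    have h1 : Tendsto (fun t : ℝ => M * (c / 2) ^ (-ν) * t ^ (-ν)) atTop (𝓝 0) := by
      simpa using (tendsto_rpow_neg_atTop hν0).const_mul (M * (c / 2) ^ (-ν))
    have h2 := (h1.eventually (ge_mem_nhds (by norm_num : (0 : ℝ) < 1 / 2)))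
    have h3 := ((eventually_ge_atTop (1 : ℝ)).and (eventually_ge_atTop (2 * C / c))).and h2
    obtain ⟨T, hT⟩ := eventually_atTop.1 h3
    refine ⟨T, fun t ht => ?_⟩
    obtain ⟨⟨a1, a2⟩, a3⟩ := hT t ht
    refine ⟨a1, ?_, a3⟩
    have := hnt t
    rw [abs_of_nonneg (by linarith)] at this
    rw [div_le_iff₀ hc] at a2
    linarith
  have hTp : 1 ≤ T := (hT T le_rfl).1
  have hT0 : 0 < T := by linarith
  have hBy : ∀ t, T ≤ t → ‖B (y t)‖ ≤ M * (c / 2) ^ (-ν) * t ^ (-ν) := by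
    intro t ht
    have h := hT t ht
    have ht0 : 0 < t := by linarith [h.1]
    refine (hB.b0 _ (c / 2 * t) (by positivity) h.2.1).trans_eq ?_
    rw [Real.mul_rpow hc2.le ht0.le, mul_assoc]
  have hBη : ∀ t, T ≤ t → |B (y t) (η t) (η t)| ≤ 1 / 2 * ‖η t‖ ^ 2 := by
    intro t ht
    have h1 : ‖B (y t)‖ ≤ 1 / 2 := (hBy t ht).trans (hT t ht).2.2
    calc _ ≤ ‖B (y t) (η t)‖ * ‖η t‖ := ContinuousLinearMap.le_opNorm _ _
      _ ≤ ‖B (y t)‖ * ‖η t‖ * ‖η t‖ := by gcongr; exact ContinuousLinearMap.le_opNorm _ _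
      _ ≤ 1 / 2 * ‖η t‖ * ‖η t‖ := by gcongr
      _ = _ := by ring
  obtain ⟨R, hRdef⟩ : ∃ R, R = Real.sqrt (2 * E0) := ⟨_, rfl⟩
  have hR0 : 0 ≤ R := hRdef ▸ Real.sqrt_nonneg _
  have hηR : ∀ t, T ≤ t → ‖η t‖ ≤ R := by
    intro t ht
    rw [hRdef]
    apply Real.le_sqrt_of_sq_le
    have := (abs_le.1 (hBη t ht)).1
    have := hE t
    linarith
  have hηl : ∀ t, T ≤ t → 2 / 3 * E0 ≤ ‖η t‖ ^ 2 := by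
    intro t ht
    have := (abs_le.1 (hBη t ht)).2
    have := hE t
    linarith
  -- convergence of η
  obtain ⟨K1, hK1⟩ : ∃ K1, K1 = 1 / 2 * (M * (c / 2) ^ (-ν - 1)) * R * R := ⟨_, rfl⟩
  have hK10 : 0 ≤ K1 := by rw [hK1]; positivity
  have hη' : ∀ t, T ≤ t → ‖-((1 / 2 : ℝ) • DD (QQ B (y t) (η t)))‖ ≤ K1 * t ^ (-ν - 1) := by
    intro t ht
    have h := hT t ht
    have ht0 : 0 < t := by linarith [h.1]
    rw [norm_neg, norm_smul, DD_norm]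
    have h1 := QQ_norm B (y t) (η t)
    have h2 := hB.b1 _ (c / 2 * t) (by positivity) h.2.1
    rw [Real.mul_rpow hc2.le ht0.le] at h2
    have h3 := hηR t ht
    calc _ ≤ ‖(1 / 2 : ℝ)‖ * (M * ((c / 2) ^ (-ν - 1) * t ^ (-ν - 1)) * R * R) := by
          gcongr
          refine h1.trans ?_
          gcongr
      _ = _ := by rw [hK1, Real.norm_of_nonneg (by norm_num)]; ring
  obtain ⟨p, hp, hpb⟩ := aux_conv hT0 hν0 hK10 (fun t _ => hη t) hη'
  obtain ⟨K2, hK2⟩ : ∃ K2, K2 = K1 / ν := ⟨_, rfl⟩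
  rw [← hK2] at hpb
  have hK20 : 0 ≤ K2 := by rw [hK2]; positivity
  have hpR : ‖p‖ ≤ R := le_of_tendsto hp.norm
    ((eventually_ge_atTop T).mono fun t ht => hηR t ht)
  have hp0 : p ≠ 0 := by
    have : 2 / 3 * E0 ≤ ‖p‖ ^ 2 := ge_of_tendsto (hp.norm.pow 2)
      ((eventually_ge_atTop T).mono fun t ht => hηl t ht)
    intro h
    rw [h] at this
    simp at this
    linarith
  have hpn : 0 < ‖p‖ := norm_pos_iff.2 hp0
  -- growth of y - t p
  obtain ⟨K3, hK3⟩ : ∃ K3, K3 = K2 + M * (c / 2) ^ (-ν) * R := ⟨_, rfl⟩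
  have hK30 : 0 ≤ K3 := by rw [hK3]; positivity
  obtain ⟨K4, hK4⟩ : ∃ K4, K4 = ‖y T - T • p‖ + K3 / (1 - ν) := ⟨_, rfl⟩
  have h1ν : 0 < 1 - ν := by linarith
  have hK40 : 0 ≤ K4 := by rw [hK4]; positivity
  have hyp : ∀ t, T ≤ t → ‖y t - t • p‖ ≤ K4 * t ^ (1 - ν) := by
    intro t ht
    have hd : ∀ t, T ≤ t → HasDerivAt (fun t => y t - t • p)
        (η t + DD (B (y t) (η t)) - (1 : ℝ) • p) t := fun t _ =>
      (hy t).sub ((hasDerivAt_id t).smul_const p)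
    have hb : ∀ t, T ≤ t → ‖η t + DD (B (y t) (η t)) - (1 : ℝ) • p‖ ≤ K3 * t ^ ((1 - ν) - 1) := by
      intro t ht
      have e : η t + DD (B (y t) (η t)) - (1 : ℝ) • p = (η t - p) + DD (B (y t) (η t)) := by
        rw [one_smul]; abel
      have e2 : (1 - ν) - 1 = -ν := by ring
      have ht0 : 0 < t := by linarith
      rw [e, e2]
      refine (norm_add_le _ _).trans ?_
      rw [DD_norm]
      have h1 : ‖B (y t) (η t)‖ ≤ M * (c / 2) ^ (-ν) * t ^ (-ν) * R :=
        (ContinuousLinearMap.le_opNorm _ _).trans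
          (mul_le_mul (hBy t ht) (hηR t ht) (norm_nonneg _) (by positivity))
      refine (add_le_add (hpb t ht) h1).trans_eq ?_
      rw [hK3]; ring
    have h := aux_growth hT0 h1ν.ne' hd hb le_rfl ht
    have h1 : 1 ≤ t ^ (1 - ν) := Real.one_le_rpow (by linarith) h1ν.le
    have h2 : 0 ≤ T ^ (1 - ν) := by positivity
    have h3 : 0 ≤ K3 / (1 - ν) := by positivity
    have h4 : ‖y t - t • p‖ ≤ ‖y T - T • p‖ + ‖(y t - t • p) - (y T - T • p)‖ := by
      have := norm_add_le (y T - T • p) ((y t - t • p) - (y T - T • p))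
      simpa using this
    rw [hK4]
    nlinarith [norm_nonneg (y T - T • p), mul_nonneg h3 h2]
  -- ball conditions
  obtain ⟨T1, hTT1, hT1⟩ : ∃ T1, T ≤ T1 ∧ ∀ t, T1 ≤ t → K4 * t ^ (-ν) ≤ ‖p‖ / 2 ∧
      K2 * t ^ (-ν) ≤ ‖p‖ / 2 := by
    have h1 : Tendsto (fun t : ℝ => K4 * t ^ (-ν)) atTop (𝓝 0) := by
      simpa using (tendsto_rpow_neg_atTop hν0).const_mul K4
    have h2 : Tendsto (fun t : ℝ => K2 * t ^ (-ν)) atTop (𝓝 0) := by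
      simpa using (tendsto_rpow_neg_atTop hν0).const_mul K2
    have hp2 : 0 < ‖p‖ / 2 := by positivity
    obtain ⟨T1, hT1⟩ := eventually_atTop.1
      ((h1.eventually (ge_mem_nhds hp2)).and (h2.eventually (ge_mem_nhds hp2)))
    exact ⟨max T T1, le_max_left _ _, fun t ht => hT1 t (le_trans (le_max_right _ _) ht)⟩
  obtain ⟨K, hK0, hK⟩ := hB.lip hp0 R hR0
  have hcont : ∀ ξ : H, Continuous (fun s : ℝ => FF B s (s • ξ) ξ) := fun ξ =>
    hB.cont_FF.comp (continuous_id.prodMk continuous_const)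
  -- the auxiliary function w
  have hw : ∀ t, HasDerivAt (fun t => y t - t • η t - DD (∫ s in (0 : ℝ)..t, FF B s (s • p) p))
      (DD (FF B t (y t) (η t) - FF B t (t • p) p)) t := by
    intro t
    have h1 := (hy t).sub ((hasDerivAt_id t).smul (hη t))
    have h2 := (DD (H := H)).hasFDerivAt.comp_hasDerivAt t
      (intervalIntegral.integral_hasDerivAt_right ((hcont p).intervalIntegrable 0 t)
        ((hcont p).stronglyMeasurableAtFilter _ _) (hcont p).continuousAt)
    refine (h1.sub h2).congr_deriv ?_
    simp only [map_sub, FF, map_add, map_smul, id, one_smul, smul_neg, smul_smul]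
    rw [show t * (1 / 2) = t / 2 by ring]
    abel
  obtain ⟨x, hx, -⟩ := aux_conv (f := fun t => y t - t • η t - DD (∫ s in (0 : ℝ)..t, FF B s (s • p) p))
    (T := T1) (K := K * (K4 + K2)) (ε := 2 * ν - 1) (by linarith) (by linarith) (by positivity)
    (fun t _ => hw t) (by
      intro t ht
      have htT := hTT1.trans ht
      have ht0 : 0 < t := by linarith
      have hyb := hyp t htT
      have tt : t ^ (1 - ν) = t * t ^ (-ν) := by
        rw [mul_comm, ← Real.rpow_add_one ht0.ne']; congr 1; ring
      rw [DD_norm]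
      have hmem : y t ∈ Metric.closedBall (t • p) (t * ‖p‖ / 2) := by
        rw [Metric.mem_closedBall, dist_eq_norm]
        refine hyb.trans ?_
        rw [tt]
        nlinarith [(hT1 t ht).1]
      refine (hK t _ _ _ _ ht0 hmem (Metric.mem_closedBall_self (by positivity)) (hηR t htT) hpR).trans ?_
      rw [mul_assoc]
      gcongr
      have r1 : t ^ (-ν - 1) * t ^ (1 - ν) = t ^ (-(2 * ν - 1) - 1) := by
        rw [← Real.rpow_add ht0]; congr 1; ring
      have r2 : t ^ (-ν) * t ^ (-ν) = t ^ (-(2 * ν - 1) - 1) := by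
        rw [← Real.rpow_add ht0]; congr 1; ring
      calc _ ≤ t ^ (-ν - 1) * (K4 * t ^ (1 - ν)) + t ^ (-ν) * (K2 * t ^ (-ν)) := by
            gcongr
            exact hpb t htT
        _ = K4 * (t ^ (-ν - 1) * t ^ (1 - ν)) + K2 * (t ^ (-ν) * t ^ (-ν)) := by ring
        _ = _ := by rw [r1, r2]; ring)
  refine ⟨x, ?_⟩
  -- the difference tends to zero
  have hdiff : Tendsto (fun t => DD (∫ s in (0 : ℝ)..t, (FF B s (s • η t) (η t) - FF B s (s • p) p)))
      atTop (𝓝 0) := by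
    have hz : Tendsto (fun t : ℝ => K * 2 * (1 / (1 - ν)) * K2 * t ^ (-(2 * ν - 1))) atTop (𝓝 0) := by
      simpa using (tendsto_rpow_neg_atTop (show 0 < 2 * ν - 1 by linarith)).const_mul
        (K * 2 * (1 / (1 - ν)) * K2)
    refine squeeze_zero_norm' ?_ hz
    filter_upwards [eventually_ge_atTop T1] with t ht
    have htT := hTT1.trans ht
    have ht0 : 0 < t := by linarith
    rw [DD_norm]
    have hb := hpb t htT
    have hbound : ∀ s ∈ Set.Ioc (0 : ℝ) t, ‖FF B s (s • η t) (η t) - FF B s (s • p) p‖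
        ≤ K * 2 * ‖η t - p‖ * s ^ (-ν) := by
      intro s hs
      have hs0 := hs.1
      have hmem : s • η t ∈ Metric.closedBall (s • p) (s * ‖p‖ / 2) := by
        rw [Metric.mem_closedBall, dist_eq_norm, ← smul_sub, norm_smul, Real.norm_of_nonneg hs0.le]
        have := hb.trans (hT1 t ht).2
        nlinarith
      refine (hK s _ _ _ _ hs0 hmem (Metric.mem_closedBall_self (by positivity)) (hηR t htT) hpR).trans_eq ?_
      rw [← smul_sub, norm_smul, Real.norm_of_nonneg hs0.le, ← mul_assoc, ← Real.rpow_add_one hs0.ne',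
        show -ν - 1 + 1 = -ν by ring]
      ring
    have hint : IntervalIntegrable (fun s : ℝ => K * 2 * ‖η t - p‖ * s ^ (-ν)) volume 0 t :=
      (intervalIntegral.intervalIntegrable_rpow' (by linarith)).const_mul _
    have h1 := intervalIntegral.norm_integral_le_of_norm_le ht0.le
      (Eventually.of_forall hbound) hint
    refine h1.trans ?_
    rw [intervalIntegral.integral_const_mul, integral_rpow (Or.inl (by linarith)),
      Real.zero_rpow (by linarith), sub_zero]
    have r1 : t ^ (-ν) * t ^ (-ν + 1) = t ^ (-(2 * ν - 1)) := by
      rw [← Real.rpow_add ht0]; congr 1; ring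
    rw [show (-ν + 1) = 1 - ν by ring] at r1 ⊢
    calc _ ≤ K * 2 * (K2 * t ^ (-ν)) * (t ^ (1 - ν) / (1 - ν)) := by gcongr
      _ = K * 2 * (1 / (1 - ν)) * K2 * (t ^ (-ν) * t ^ (1 - ν)) := by ring
      _ = _ := by rw [r1]
  have := hx.sub hdiff
  rw [sub_zero] at this
  refine this.congr fun t => ?_
  rw [intervalIntegral.integral_sub ((hcont _).intervalIntegrable _ _) ((hcont _).intervalIntegrable _ _),
    map_sub]
  abel

theorem abs_both {B : H → H →L[ℝ] H →L[ℝ] ℝ} {ν M : ℝ} (hB : Dec B ν M)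
    (hν : 1 / 2 < ν) (hν1 : ν < 1)
    (hpos : ∀ x ξ, ξ ≠ 0 → 0 < inner ℝ ξ ξ + B x ξ ξ) {y η : ℝ → H} (h0 : η 0 ≠ 0)
    (hy : ∀ t, HasDerivAt y (η t + DD (B (y t) (η t))) t)
    (hη : ∀ t, HasDerivAt η (-((1 / 2 : ℝ) • DD (QQ B (y t) (η t)))) t)
    {c C : ℝ} (hc : 0 < c) (hnt : ∀ t : ℝ, c * |t| - C ≤ ‖y t‖) :
    (∃ L, Tendsto (fun t => y t - (t • η t + DD (∫ s in (0 : ℝ)..t, FF B s (s • η t) (η t))))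
      atTop (𝓝 L)) ∧
    (∃ L, Tendsto (fun t => y t - (t • η t + DD (∫ s in (0 : ℝ)..t, FF B s (s • η t) (η t))))
      atBot (𝓝 L)) := by
  refine ⟨abs_main hB hν hν1 hpos h0 hy hη hc hnt, ?_⟩
  have hQ : ∀ x ξ : H, QQ B x (-ξ) = QQ B x ξ := by
    intro x ξ; ext v; simp [QQ_apply]
  obtain ⟨L, hL⟩ := abs_main (y := fun t => y (-t)) (η := fun t => -η (-t)) hB hν hν1 hpos
    (by simpa using h0)
    (by
      intro t
      refine ((hy (-t)).scomp t (hasDerivAt_neg t)).congr_deriv ?_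
      simp only [map_neg, neg_smul, one_smul]
      abel)
    (by
      intro t
      refine (((hη (-t)).scomp t (hasDerivAt_neg t)).neg).congr_deriv ?_
      simp only [hQ, neg_smul, one_smul, neg_neg]) hc (by intro t; simpa using hnt (-t))
  refine ⟨L, ?_⟩
  refine (hL.comp tendsto_neg_atBot_atTop).congr fun t => ?_
  simp only [Function.comp, neg_neg]
  have e : (∫ s in (0 : ℝ)..(-t), FF B s (s • -η t) (-η t)) = ∫ s in (0 : ℝ)..t, FF B s (s • η t) (η t) := by
    have h1 : ∀ s : ℝ, FF B s (s • -η t) (-η t) = - (fun u => FF B u (u • η t) (η t)) (-s) := by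
      intro s
      have := FF_neg B (-s) (s • -η t) (η t)
      rw [neg_neg] at this
      rw [this]
      simp
    simp_rw [h1]
    rw [intervalIntegral.integral_neg, intervalIntegral.integral_comp_neg (fun u => FF B u (u • η t) (η t)), intervalIntegral.integral_symm]
    simp
  rw [e]
  simp

end Abstract2
section Concrete

set_option synthInstance.maxHeartbeats 400000
set_option maxHeartbeats 1000000
set_option maxSynthPendingDepth 3

theorem FF_cont1 {H : Type*} [NormedAddCommGroup H] [InnerProductSpace ℝ H]
    {B : H → H →L[ℝ] H →L[ℝ] ℝ} {ν M : ℝ} (hB : Dec B ν M) (ξ : H) :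
    Continuous (fun s : ℝ => FF B s (s • ξ) ξ) :=
  hB.cont_FF.comp (continuous_id.prodMk continuous_const)

theorem quad_fderiv {H : Type*} [NormedAddCommGroup H] [InnerProductSpace ℝ H]
    {β : H → H →L[ℝ] H →L[ℝ] ℝ} {β' : H →L[ℝ] H →L[ℝ] H →L[ℝ] ℝ} {ξ : H}
    (h : HasFDerivAt β β' ξ) (hs : ∀ u v, β ξ u v = β ξ v u) :
    HasFDerivAt (fun ξ => (1 / 2 : ℝ) * (inner ℝ ξ ξ + β ξ ξ ξ))
      (innerSL ℝ ξ + (β ξ ξ + (1 / 2 : ℝ) • (β'.flip ξ).flip ξ)) ξ := by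
  have h1 := (h.clm_apply (hasFDerivAt_id ξ)).clm_apply (hasFDerivAt_id ξ)
  have h2 := (hasFDerivAt_id (𝕜 := ℝ) ξ).inner ℝ (hasFDerivAt_id (𝕜 := ℝ) ξ)
  refine ((h2.add h1).const_mul (1 / 2 : ℝ)).congr_fderiv ?_
  ext v
  simp [hs v ξ, real_inner_comm ξ v]
  ring

/-- elementary bilinear forms -/
def ee {d : ℕ} (m n : Fin d) : E d →L[ℝ] E d →L[ℝ] ℝ :=
  (EuclideanSpace.proj m : E d →L[ℝ] ℝ).smulRight (EuclideanSpace.proj n : E d →L[ℝ] ℝ)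

def BB {d : ℕ} (a : Fin d → Fin d → E d → ℝ) (x : E d) : E d →L[ℝ] E d →L[ℝ] ℝ :=
  ∑ m, ∑ n, (a m n x - if m = n then (1 : ℝ) else 0) • ee m n

theorem BB_apply {d : ℕ} (a : Fin d → Fin d → E d → ℝ) (x u v : E d) :
    BB a x u v = ∑ m, ∑ n, (a m n x - if m = n then (1 : ℝ) else 0) * (u m * v n) := by
  simp [BB, ee]

theorem sum_eq {d : ℕ} (a : Fin d → Fin d → E d → ℝ) (x ξ : E d) :
    ∑ m : Fin d, ∑ n : Fin d, a m n x * ξ m * ξ n = inner ℝ ξ ξ + BB a x ξ ξ := by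
  rw [BB_apply]
  have : (inner ℝ ξ ξ : ℝ) = ∑ m : Fin d, ∑ n : Fin d, (if m = n then (1 : ℝ) else 0) * (ξ m * ξ n) := by
    rw [PiLp.inner_apply]
    simp
    try (refine Finset.sum_congr rfl fun m _ => by ring)
  rw [this, ← Finset.sum_add_distrib]
  refine Finset.sum_congr rfl fun m _ => ?_
  rw [← Finset.sum_add_distrib]
  refine Finset.sum_congr rfl fun n _ => ?_
  ring

theorem kk_eq {d : ℕ} (a : Fin d → Fin d → E d → ℝ) (x ξ : E d) :
    kk a x ξ = (1 / 2) * (inner ℝ ξ ξ + BB a x ξ ξ) := by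
  rw [← sum_eq, kk]

theorem BB_iter {d : ℕ} {μ : ℝ} {a : Fin d → Fin d → E d → ℝ} {V : E d → ℝ}
    (hA : AssumptionA μ a V) (j : ℕ) :
    ∃ M, 0 ≤ M ∧ ∀ x, ‖iteratedFDeriv ℝ j (BB a) x‖ ≤ M * jap x ^ (-μ - (j : ℝ)) := by
  obtain ⟨hs, -, -, -, hd, -⟩ := hA
  choose! c hc0 hc using fun m n => hd m n j
  refine ⟨∑ m, ∑ n, ‖((1 : ℝ →L[ℝ] ℝ).smulRight (ee m n : E d →L[ℝ] E d →L[ℝ] ℝ))‖ * c m n,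
    Finset.sum_nonneg fun m _ => Finset.sum_nonneg fun n _ =>
      mul_nonneg (norm_nonneg _) (hc0 m n).le, fun x => ?_⟩
  have hf : ∀ m n, ContDiff ℝ j (fun z => a m n z - if m = n then (1 : ℝ) else 0) := fun m n =>
    ((hs m n).of_le (by exact_mod_cast le_top)).sub contDiff_const
  have hg : ∀ m n, ContDiff ℝ j (fun z => (a m n z - if m = n then (1 : ℝ) else 0) •
      (ee m n : E d →L[ℝ] E d →L[ℝ] ℝ)) := fun m n => (hf m n).smul contDiff_const
  have e : BB a = fun x => ∑ m, ∑ n, (a m n x - if m = n then (1 : ℝ) else 0) • ee m n := rfl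
  rw [e, iteratedFDeriv_fun_sum_apply (fun m _ => (ContDiff.sum fun n _ => hg m n).contDiffAt),
    Finset.sum_mul]
  refine (norm_sum_le _ _).trans (Finset.sum_le_sum fun m _ => ?_)
  rw [iteratedFDeriv_fun_sum_apply (fun n _ => (hg m n).contDiffAt), Finset.sum_mul]
  refine (norm_sum_le _ _).trans (Finset.sum_le_sum fun n _ => ?_)
  have h1 := ((1 : ℝ →L[ℝ] ℝ).smulRight (ee m n : E d →L[ℝ] E d →L[ℝ] ℝ)).norm_iteratedFDeriv_comp_left
    (x := x) (hf m n).contDiffAt (le_refl (j : WithTop ℕ∞))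
  rw [mul_assoc]
  refine le_trans (le_of_eq ?_) (h1.trans (mul_le_mul_of_nonneg_left (hc m n x) (norm_nonneg _)))
  congr 2

theorem jap_bound {d : ℕ} {x : E d} {r ν μ j : ℝ} (hr : 0 < r) (hx : r ≤ ‖x‖) (hν : 0 ≤ ν) (hνμ : ν ≤ μ)
    (hj : 0 ≤ j) : jap x ^ (-μ - j) ≤ r ^ (-ν - j) := by
  have h1 : 1 ≤ jap x := by
    unfold jap
    rw [Real.one_le_sqrt]
    nlinarith [sq_nonneg ‖x‖]
  have h2 : r ≤ jap x := by
    unfold jap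
    apply Real.le_sqrt_of_sq_le
    nlinarith
  refine (Real.rpow_le_rpow_of_exponent_le h1 (by linarith : -μ - j ≤ -ν - j)).trans ?_
  exact Real.rpow_le_rpow_of_nonpos hr h2 (by linarith)

theorem BB_dec {d : ℕ} {μ ν : ℝ} {a : Fin d → Fin d → E d → ℝ} {V : E d → ℝ}
    (hA : AssumptionA μ a V) (hν : 0 ≤ ν) (hνμ : ν ≤ μ) : ∃ M, Dec (BB a) ν M := by
  obtain ⟨M0, h00, h0⟩ := BB_iter hA 0
  obtain ⟨M1, h10, h1⟩ := BB_iter hA 1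
  obtain ⟨M2, h20, h2⟩ := BB_iter hA 2
  obtain ⟨hs, -, hsym, -, -, -⟩ := hA
  refine ⟨M0 + M1 + M2, ?_, ?_, by positivity, ?_, ?_, ?_⟩
  · have hf : ∀ m n, ContDiff ℝ 2 (fun z => a m n z - if m = n then (1 : ℝ) else 0) := fun m n =>
      (contDiff_infty.1 (hs m n) 2).sub contDiff_const
    exact ContDiff.sum fun m _ => ContDiff.sum fun n _ => (hf m n).smul contDiff_const
  · intro x u v
    rw [BB_apply, BB_apply, Finset.sum_comm]
    refine Finset.sum_congr rfl fun m _ => Finset.sum_congr rfl fun n _ => ?_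
    rw [hsym n m x]
    simp only [eq_comm (a := n)]
    ring
  · intro x r hr hx
    have h := h0 x
    rw [norm_iteratedFDeriv_zero] at h
    have hb := jap_bound hr hx hν hνμ (le_refl 0)
    simp only [Nat.cast_zero, sub_zero] at h hb
    refine h.trans (mul_le_mul (by linarith) hb ?_ (by positivity))
    exact Real.rpow_nonneg (Real.sqrt_nonneg _) _
  · intro x r hr hx
    have h := h1 x
    rw [norm_iteratedFDeriv_one] at h
    have hb := jap_bound hr hx hν hνμ (zero_le_one)
    simp only [Nat.cast_one] at h
    refine h.trans (mul_le_mul (by linarith) hb ?_ (by positivity))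
    exact Real.rpow_nonneg (Real.sqrt_nonneg _) _
  · intro x r hr hx
    have h := h2 x
    rw [← norm_iteratedFDeriv_fderiv, norm_iteratedFDeriv_one] at h
    have hb := jap_bound hr hx hν hνμ (zero_le_two)
    simp only [Nat.cast_ofNat] at h
    refine h.trans (mul_le_mul (by linarith) hb ?_ (by positivity))
    exact Real.rpow_nonneg (Real.sqrt_nonneg _) _

theorem DD_innerSL {d : ℕ} (ξ : E d) : DD (innerSL ℝ ξ) = ξ := by
  refine ext_inner_right ℝ fun v => ?_
  rw [DD_inner]; simp

theorem grad_of {d : ℕ} {f : E d → ℝ} {f' : E d →L[ℝ] ℝ} {x : E d} (h : HasFDerivAt f f' x) :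
    gradient f x = DD f' := by
  unfold gradient
  rw [h.fderiv, DD_eq]

theorem grad_xi {d : ℕ} {ν M : ℝ} {a : Fin d → Fin d → E d → ℝ} (hB : Dec (BB a) ν M) (x ξ : E d) :
    gradient (kk a x) ξ = ξ + DD (BB a x ξ) := by
  have h := quad_fderiv (β := fun _ => BB a x) (ξ := ξ) (hasFDerivAt_const _ _) (hB.symm x)
  have e : kk a x = fun ξ => (1 / 2 : ℝ) * (inner ℝ ξ ξ + BB a x ξ ξ) := funext fun ξ => kk_eq a x ξ
  rw [e, grad_of h]
  have : ((0 : E d →L[ℝ] E d →L[ℝ] E d →L[ℝ] ℝ).flip ξ).flip ξ = 0 := by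
    ext v; simp
  rw [this, smul_zero, add_zero, map_add, DD_innerSL]

theorem grad_x {d : ℕ} {ν M : ℝ} {a : Fin d → Fin d → E d → ℝ} (hB : Dec (BB a) ν M) (x ξ : E d) :
    gradient (fun x => kk a x ξ) x = (1 / 2 : ℝ) • DD (QQ (BB a) x ξ) := by
  have e : (fun x => kk a x ξ) = fun x => (1 / 2 : ℝ) * (inner ℝ ξ ξ + BB a x ξ ξ) :=
    funext fun x => kk_eq a x ξ
  have hd : HasFDerivAt (BB a) (fderiv ℝ (BB a) x) x :=
    (hB.smooth.differentiable (by norm_num) x).hasFDerivAt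
  have h1 := (((hd.clm_apply (hasFDerivAt_const ξ x)).clm_apply (hasFDerivAt_const ξ x)).const_add
    (inner ℝ ξ ξ : ℝ)).const_mul (1 / 2 : ℝ)
  rw [e, grad_of h1, map_smul]
  congr 2
  ext v
  simp [QQ_apply]

theorem kk_diag {d : ℕ} {ν M : ℝ} {a : Fin d → Fin d → E d → ℝ} (hB : Dec (BB a) ν M) (s : ℝ) (ξ : E d) :
    HasFDerivAt (fun ξ => kk a (s • ξ) ξ) (innerSL ℝ ξ + FF (BB a) s (s • ξ) ξ) ξ := by
  have hd : HasFDerivAt (BB a) (fderiv ℝ (BB a) (s • ξ)) (s • ξ) :=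
    (hB.smooth.differentiable (by norm_num) _).hasFDerivAt
  have h0 : HasFDerivAt (fun ξ : E d => s • ξ) (s • ContinuousLinearMap.id ℝ (E d)) ξ :=
    (hasFDerivAt_id ξ).const_smul s
  have h := quad_fderiv (β := fun ξ => BB a (s • ξ)) (ξ := ξ) (hd.comp ξ h0) (hB.symm _)
  simp only [kk_eq]
  refine h.congr_fderiv ?_
  ext v
  simp [FF, QQ_apply]
  ring

theorem param_fderiv {G : Type*} [NormedAddCommGroup G] [NormedSpace ℝ G] [ProperSpace G]
    {f : G → ℝ → ℝ} {f' : G → ℝ → G →L[ℝ] ℝ} (hf : ∀ ζ, Continuous (f ζ))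
    (hf' : Continuous (fun q : ℝ × G => f' q.2 q.1))
    (hd : ∀ s ζ, HasFDerivAt (fun ζ => f ζ s) (f' ζ s) ζ) (t : ℝ) (ξ : G) :
    HasFDerivAt (fun ζ => ∫ s in (0 : ℝ)..t, f ζ s) (∫ s in (0 : ℝ)..t, f' ξ s) ξ := by
  obtain ⟨K, hK⟩ := ((isCompact_uIcc (a := (0 : ℝ)) (b := t)).prod
    (isCompact_closedBall ξ 1)).exists_bound_of_continuousOn hf'.continuousOn
  have hc : Continuous (f' ξ) := hf'.comp (continuous_id.prodMk continuous_const)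
  exact intervalIntegral.hasFDerivAt_integral_of_dominated_of_fderiv_le (𝕜 := ℝ) (μ := volume)
    (s := Metric.closedBall ξ 1) (bound := fun _ => K)
    (Metric.closedBall_mem_nhds _ one_pos)
    (Eventually.of_forall fun ζ => (hf ζ).aestronglyMeasurable)
    ((hf ξ).intervalIntegrable _ _)
    hc.aestronglyMeasurable
    (Eventually.of_forall fun s hs ζ hζ => hK (s, ζ) ⟨Set.uIoc_subset_uIcc hs, hζ⟩)
    (intervalIntegrable_const)
    (Eventually.of_forall fun s _ ζ _ => hd s ζ)

theorem int_add_const {G : Type*} [NormedAddCommGroup G] [NormedSpace ℝ G] [CompleteSpace G]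
    {f : ℝ → G} (hf : Continuous f) (g : G) (t : ℝ) :
    (∫ s in (0 : ℝ)..t, (g + f s)) = t • g + ∫ s in (0 : ℝ)..t, f s := by
  rw [intervalIntegral.integral_add intervalIntegrable_const (hf.intervalIntegrable _ _),
    intervalIntegral.integral_const, sub_zero]

theorem kk_cont {d : ℕ} {ν M : ℝ} {a : Fin d → Fin d → E d → ℝ} (hB : Dec (BB a) ν M) (ζ : E d) :
    Continuous (fun s : ℝ => kk a (s • ζ) ζ) := by
  simp only [kk_eq]
  have h1 : Continuous (fun s : ℝ => BB a (s • ζ)) :=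
    hB.smooth.continuous.comp (by fun_prop)
  have h2 := (h1.clm_apply (continuous_const (y := ζ))).clm_apply (continuous_const (y := ζ))
  exact continuous_const.mul (continuous_const.add h2)

theorem FF_cont2 {d : ℕ} {ν M : ℝ} {a : Fin d → Fin d → E d → ℝ} (hB : Dec (BB a) ν M) :
    Continuous (fun q : ℝ × E d => innerSL ℝ q.2 + FF (BB a) q.1 (q.1 • q.2) q.2) :=
  ((innerSL ℝ).continuous.comp continuous_snd).add hB.cont_FF

theorem grad_Psi {d : ℕ} {ν M : ℝ} {a : Fin d → Fin d → E d → ℝ} (hB : Dec (BB a) ν M) (t : ℝ) (ξ : E d) :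
    gradient (Psi a t) ξ = t • ξ + DD (∫ s in (0 : ℝ)..t, FF (BB a) s (s • ξ) ξ) := by
  have hmc : Continuous (fun s : ℝ => FF (BB a) s (s • ξ) ξ) :=
    FF_cont1 hB ξ
  have h := param_fderiv (f := fun (ζ : E d) (s : ℝ) => kk a (s • ζ) ζ)
    (f' := fun (ζ : E d) (s : ℝ) => innerSL ℝ ζ + FF (BB a) s (s • ζ) ζ)
    (kk_cont hB) (FF_cont2 hB) (fun s ζ => kk_diag hB s ζ) t ξ
  have e : Psi a t = fun ζ => ∫ s in (0 : ℝ)..t, kk a (s • ζ) ζ := rfl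
  have e2 := int_add_const hmc (innerSL ℝ ξ) t
  rw [e, grad_of h, e2, map_add, map_smul, DD_innerSL]

end Concrete

/-- Proposition 1 (existence of asymptotic positions). -/
theorem stmt1 (d : ℕ) (hd : 1 ≤ d) (μ : ℝ) (hμ : 1 / 2 < μ) (hμ1 : μ ≤ 1)
    (a : Fin d → Fin d → E d → ℝ) (V : E d → ℝ) (hA : AssumptionA μ a V)
    (y η : ℝ → E d) (ξ0 : E d) (hξ0 : ξ0 ≠ 0) (hη0 : η 0 = ξ0)
    (hHam : IsHamiltonSol (kk a) y η)
    (c C : ℝ) (hc : 0 < c) (hC : 0 < C) (hnt : ∀ t : ℝ, c * |t| - C ≤ ‖y t‖) :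
    (∃ xp : E d, Tendsto (fun t => y t - gradient (Psi a t) (η t)) atTop (𝓝 xp)) ∧
    (∃ xm : E d, Tendsto (fun t => y t - gradient (Psi a t) (η t)) atBot (𝓝 xm)) := by
  have hν : 1 / 2 < (μ + 1 / 2) / 2 := by linarith
  obtain ⟨M, hB⟩ := BB_dec (ν := (μ + 1 / 2) / 2) hA (by linarith) (by linarith)
  have hp : ∀ x ξ : E d, ξ ≠ 0 → 0 < inner ℝ ξ ξ + BB a x ξ ξ := by
    intro x ξ hξ
    rw [← sum_eq]
    exact hA.2.2.2.1 x ξ hξ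
  have h := abs_both hB hν (by linarith) hp (y := y) (η := η) (by rw [hη0]; exact hξ0)
    (fun t => by rw [← grad_xi hB]; exact (hHam t).1)
    (fun t => by rw [← grad_x hB]; exact (hHam t).2) hc hnt
  simp only [grad_Psi hB]
  exact h
end
end
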